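/- arXiv:2212.12785 — 2 statements merged into one kernel-verified Lean document; each statement's English description precedes it below -/
import Mathlib

section
/- Completeness of CL signature verification: for every secret key (x, y, z_1, …, z_l) ∈ Z_p^{l+2}, every message vector (m_0, m_1, …, m_l) ∈ Z_p^{l+1}, and every randomness α ∈ Z_p, the honestly generated signature σ = (a, {A_i}, b, {B_i}, c), where a = g^{α}, A_i = a^{z_i}, b = a^{y}, B_i = A_i^{y}, and c = a^{x} · (g^{m_0} · ∏_{i=1}^{l} (g^{z_i})^{m_i})^{α·x·y}, simultaneously satisfies all three verification checks: (i) e(a, g^{z_i}) = e(g, A_i) for all i, (ii) e(a, g^{y}) = e(g, b) and e(A_i, g^{y}) = e(g, B_i) for all i, and (iii) e(g^{x}, a) · e(g^{x}, b)^{m_0} · ∏_{i=1}^{l} e(g^{x}, B_i)^{m_i} = e(g, c). -/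
/-!
Everything is a power of `g`, so by bilinearity every pairing value is a power of `e g g` and each
check is an identity between exponents. In the last check both sides have exponent
`α x + α x y (m₀ + ∑ i, z i * m i)`.
-/

section PowersOfElement

variable {H ι : Type*} [CommGroup H]

theorem prod_zpow_eq_zpow_sum (h : H) (s : Finset ι) (k : ι → ℤ) :
    ∏ i ∈ s, h ^ k i = h ^ ∑ i ∈ s, k i := by
  simpa only [ofAdd_sum, zpowersHom_apply, toAdd_ofAdd, toAdd_prod] using
    (map_prod (zpowersHom H h) (fun i => Multiplicative.ofAdd (k i)) s).symm

theorem commitment_eq_zpow [Fintype ι] (g : H) (m₀ : ℤ) (z m : ι → ℤ) :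
    g ^ m₀ * ∏ i, (g ^ z i) ^ m i = g ^ (m₀ + ∑ i, z i * m i) := by
  simp only [← zpow_mul, prod_zpow_eq_zpow_sum, ← zpow_add]

end PowersOfElement

section Pairing

variable {G GT : Type*} [Group G] [Group GT] {g : G} {e : G → G → GT}

theorem pairing_zpow_right
    (he : ∀ s t : ℤ, e (g ^ s) (g ^ t) = e g g ^ (s * t)) (t : ℤ) :
    e g (g ^ t) = e g g ^ t := by
  simpa only [zpow_one, one_mul] using he 1 t

theorem pairing_zpow_zpow
    (he : ∀ s t : ℤ, e (g ^ s) (g ^ t) = e g g ^ (s * t)) (s t : ℤ) :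
    e (g ^ s) (g ^ t) = e g ((g ^ s) ^ t) := by
  rw [he, ← zpow_mul, pairing_zpow_right he]

end Pairing

theorem pairing_mul_prod_eq_pairing_signature {G GT ι : Type*} [CommGroup G] [CommGroup GT]
    [Fintype ι] {g : G} {e : G → G → GT}
    (he : ∀ s t : ℤ, e (g ^ s) (g ^ t) = e g g ^ (s * t)) (x y m₀ α : ℤ) (z m : ι → ℤ) :
    e (g ^ x) (g ^ α) * e (g ^ x) (g ^ (α * y)) ^ m₀ *
        ∏ i, e (g ^ x) (g ^ (α * z i * y)) ^ m i =
      e g ((g ^ α) ^ x * (g ^ m₀ * ∏ i, (g ^ z i) ^ m i) ^ (α * x * y)) := by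
  have exponents_eq :
      x * α + x * (α * y) * m₀ + ∑ i, x * (α * z i * y) * m i =
        α * x + (m₀ + ∑ i, z i * m i) * (α * x * y) := by
    have sum_eq : ∑ i, x * (α * z i * y) * m i = (∑ i, z i * m i) * (α * x * y) := by
      rw [Finset.sum_mul]
      exact Finset.sum_congr rfl fun i _ => by ring
    rw [sum_eq]
    ring
  calc
    _ = e g g ^ (x * α + x * (α * y) * m₀ + ∑ i, x * (α * z i * y) * m i) := by
      simp only [he, ← zpow_mul, prod_zpow_eq_zpow_sum, ← zpow_add]
    _ = e g g ^ (α * x + (m₀ + ∑ i, z i * m i) * (α * x * y)) := by rw [exponents_eq]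
    _ = e g ((g ^ α) ^ x * (g ^ m₀ * ∏ i, (g ^ z i) ^ m i) ^ (α * x * y)) := by
      rw [commitment_eq_zpow, ← zpow_mul, ← zpow_mul, ← zpow_add, pairing_zpow_right he]

theorem cl_completeness_general {G GT ι : Type*} [CommGroup G] [CommGroup GT] [Fintype ι]
    {g : G} {e : G → G → GT} (he : ∀ s t : ℤ, e (g ^ s) (g ^ t) = e g g ^ (s * t))
    {x y m₀ α : ℤ} {z m : ι → ℤ} {a b c : G} {A B : ι → G}
    (ha : a = g ^ α) (hA : ∀ i, A i = a ^ z i) (hb : b = a ^ y) (hB : ∀ i, B i = (A i) ^ y)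
    (hc : c = a ^ x * (g ^ m₀ * ∏ i, (g ^ z i) ^ m i) ^ (α * x * y)) :
    (∀ i, e a (g ^ z i) = e g (A i)) ∧
      (e a (g ^ y) = e g b ∧ ∀ i, e (A i) (g ^ y) = e g (B i)) ∧
      e (g ^ x) a * (e (g ^ x) b) ^ m₀ * ∏ i, (e (g ^ x) (B i)) ^ m i = e g c := by
  have hA_zpow (i : ι) : A i = g ^ (α * z i) := by rw [hA, ha, zpow_mul]
  have hB_zpow (i : ι) : B i = g ^ (α * z i * y) := by rw [hB, hA_zpow, ← zpow_mul]
  have hb_zpow : b = g ^ (α * y) := by rw [hb, ha, zpow_mul]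
  refine ⟨fun i => ?_, ⟨?_, fun i => ?_⟩, ?_⟩
  · rw [hA, ha, pairing_zpow_zpow he]
  · rw [hb, ha, pairing_zpow_zpow he]
  · rw [hB, hA_zpow, pairing_zpow_zpow he]
  · simp only [hb_zpow, hB_zpow, hc, ha]
    exact pairing_mul_prod_eq_pairing_signature he x y m₀ α z m

/-- Completeness of CL signature verification: for every secret key
`(x, y, z₁, …, z_l)`, every message vector `(m₀, m₁, …, m_l)`, and every
randomness `α`, the honestly generated signature `(a, {A i}, b, {B i}, c)` with
`a = g^α`, `A i = a^(z i)`, `b = a^y`, `B i = (A i)^y`,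
`c = a^x * (g^(m₀) * ∏ i, (g^(z i))^(m i))^(α*x*y)`
satisfies all three verification checks. -/
theorem cl_completeness
    {G GT : Type*} [CommGroup G] [CommGroup GT]
    (p : ℕ) (hp : p.Prime) (hGcard : Nat.card G = p) (hGTcard : Nat.card GT = p)
    (g : G) (hg : ∀ x : G, x ∈ Subgroup.zpowers g)
    (e : G → G → GT)
    (he : ∀ (u v : G) (a b : ℤ), e (u ^ a) (v ^ b) = e u v ^ (a * b)) :
    ∀ (l : ℕ) (x y : ℤ) (z : Fin l → ℤ) (m₀ : ℤ) (m : Fin l → ℤ) (α : ℤ),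
    ∀ (a b c : G) (A B : Fin l → G),
      a = g ^ α →
      (∀ i, A i = a ^ z i) →
      b = a ^ y →
      (∀ i, B i = (A i) ^ y) →
      c = a ^ x * (g ^ m₀ * ∏ i, (g ^ z i) ^ m i) ^ (α * x * y) →
      ((∀ i, e a (g ^ z i) = e g (A i)) ∧
       (e a (g ^ y) = e g b ∧ ∀ i, e (A i) (g ^ y) = e g (B i)) ∧
       e (g ^ x) a * (e (g ^ x) b) ^ m₀ * ∏ i, (e (g ^ x) (B i)) ^ m i = e g c) := by
  intro l x y z m₀ m α a b c A B ha hA hb hB hc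
  exact cl_completeness_general (he g g) ha hA hb hB hc
end

section
/- Correctness of the re-randomization underlying unlinkable shows of a CL signature: if σ = (a, {A_i}, b, {B_i}, c) is a signature satisfying all three CL verification equations for public key (X, Y, Z_1, …, Z_l) and message vector (m_0, …, m_l), then for every r ∈ Z_p the tuple σ' = (a^r, {A_i^r}, b^r, {B_i^r}, c^r) also satisfies all three verification equations for the same public key and message vector. -/
section Pairing

variable {G₁ G₂ GT : Type*} [DivInvMonoid G₁] [DivInvMonoid G₂]

/-- Bilinearity of a pairing in the exponent form customary in pairing-based cryptography. On cyclic
groups it is equivalent to multiplicativity in each argument; in general it is weaker. -/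
def IsZPowBilinear [DivInvMonoid GT] (e : G₁ → G₂ → GT) : Prop :=
  ∀ (u : G₁) (v : G₂) (a b : ℤ), e (u ^ a) (v ^ b) = e u v ^ (a * b)

namespace IsZPowBilinear

theorem zpow_left [DivInvMonoid GT] {e : G₁ → G₂ → GT} (he : IsZPowBilinear e)
    (u : G₁) (v : G₂) (r : ℤ) : e (u ^ r) v = e u v ^ r := by
  simpa only [zpow_one, mul_one] using he u v r 1

theorem zpow_right [DivInvMonoid GT] {e : G₁ → G₂ → GT} (he : IsZPowBilinear e)
    (u : G₁) (v : G₂) (r : ℤ) : e u (v ^ r) = e u v ^ r := by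
  simpa only [zpow_one, one_mul] using he u v 1 r

theorem zpow_left_eq_zpow_right [DivInvMonoid GT] {e : G₁ → G₂ → GT} (he : IsZPowBilinear e)
    {u u' : G₁} {v v' : G₂} (h : e u v = e u' v') (r : ℤ) : e (u ^ r) v = e u' (v' ^ r) := by
  rw [he.zpow_left, he.zpow_right, h]

theorem zpow_right_zpow_comm [DivisionMonoid GT] {e : G₁ → G₂ → GT} (he : IsZPowBilinear e)
    (u : G₁) (v : G₂) (r n : ℤ) : e u (v ^ r) ^ n = (e u v ^ n) ^ r := by
  rw [he.zpow_right, zpow_comm]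

theorem prod_zpow_right [DivisionCommMonoid GT] {e : G₁ → G₂ → GT} (he : IsZPowBilinear e)
    {ι : Type*} (s : Finset ι) (u : G₁) (v : ι → G₂) (n : ι → ℤ) (r : ℤ) :
    ∏ i ∈ s, e u (v i ^ r) ^ n i = (∏ i ∈ s, e u (v i) ^ n i) ^ r := by
  simp only [he.zpow_right_zpow_comm, Finset.prod_zpow]

end IsZPowBilinear

end Pairing

/-- The verification equations of the Camenisch–Lysyanskaya signature scheme: `(a, A, b, B, c)` is
accepted as a signature on the message vector `(m₀, m)` under the public key `(X, Y, Z)`; in the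
scheme `g` is a generator, and messages are integer representatives of residues modulo its order. -/
def IsCLSignature {G GT ι : Type*} [DivisionCommMonoid GT] [Fintype ι] (e : G → G → GT)
    (g X Y : G) (Z : ι → G) (m₀ : ℤ) (m : ι → ℤ) (a : G) (A : ι → G) (b : G) (B : ι → G) (c : G) :
    Prop :=
  (∀ i, e a (Z i) = e g (A i)) ∧
  (e a Y = e g b ∧ ∀ i, e (A i) Y = e g (B i)) ∧
  e X a * (e X b) ^ m₀ * ∏ i, (e X (B i)) ^ m i = e g c

theorem cl_rerandomization_correct_general {G GT ι : Type*} [DivInvMonoid G]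
    [DivisionCommMonoid GT] [Fintype ι] {e : G → G → GT} (he : IsZPowBilinear e)
    {g X Y : G} {Z : ι → G} {m₀ : ℤ} {m : ι → ℤ} {a b c : G} {A B : ι → G}
    (hσ : IsCLSignature e g X Y Z m₀ m a A b B c) (r : ℤ) :
    IsCLSignature e g X Y Z m₀ m
      (a ^ r) (fun i ↦ A i ^ r) (b ^ r) (fun i ↦ B i ^ r) (c ^ r) := by
  obtain ⟨hA, ⟨hb, hB⟩, hc⟩ := hσ
  refine ⟨fun i ↦ he.zpow_left_eq_zpow_right (hA i) r,
    ⟨he.zpow_left_eq_zpow_right hb r, fun i ↦ he.zpow_left_eq_zpow_right (hB i) r⟩, ?_⟩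
  calc e X (a ^ r) * e X (b ^ r) ^ m₀ * ∏ i, e X (B i ^ r) ^ m i
      = e X a ^ r * (e X b ^ m₀) ^ r * (∏ i, e X (B i) ^ m i) ^ r := by
        rw [he.zpow_right, he.zpow_right_zpow_comm, he.prod_zpow_right]
    _ = (e X a * e X b ^ m₀ * ∏ i, e X (B i) ^ m i) ^ r := by rw [mul_zpow, mul_zpow]
    _ = e g (c ^ r) := by rw [hc, he.zpow_right]

/-- Correctness of the re-randomization underlying unlinkable shows of a CL
signature: if `(a, {A i}, b, {B i}, c)` satisfies all three CL verification
equations for public key `(X, Y, Z₁, …, Z_l)` and message vector `(m₀, …, m_l)`,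
then for every `r` the tuple `(a^r, {(A i)^r}, b^r, {(B i)^r}, c^r)` also
satisfies all three verification equations for the same public key and
message vector. -/
theorem cl_rerandomization_correct
    {G GT : Type*} [CommGroup G] [CommGroup GT]
    (p : ℕ) (hp : p.Prime) (hGcard : Nat.card G = p) (hGTcard : Nat.card GT = p)
    (g : G) (hg : ∀ x : G, x ∈ Subgroup.zpowers g)
    (e : G → G → GT)
    (he : ∀ (u v : G) (a b : ℤ), e (u ^ a) (v ^ b) = e u v ^ (a * b))
    (l : ℕ) (X Y : G) (Z : Fin l → G)
    (m₀ : ℤ) (m : Fin l → ℤ)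
    (a b c : G) (A B : Fin l → G)
    (h1 : ∀ i, e a (Z i) = e g (A i))
    (h2 : e a Y = e g b ∧ ∀ i, e (A i) Y = e g (B i))
    (h3 : e X a * (e X b) ^ m₀ * ∏ i, (e X (B i)) ^ m i = e g c)
    (r : ℤ) :
    (∀ i, e (a ^ r) (Z i) = e g ((A i) ^ r)) ∧
    (e (a ^ r) Y = e g (b ^ r) ∧ ∀ i, e ((A i) ^ r) Y = e g ((B i) ^ r)) ∧
    e X (a ^ r) * (e X (b ^ r)) ^ m₀ * ∏ i, (e X ((B i) ^ r)) ^ m i = e g (c ^ r) :=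
  cl_rerandomization_correct_general he ⟨h1, h2, h3⟩ r
end
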